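/- arXiv:2307.08400 — 4 statements merged into one kernel-verified Lean document; each statement's English description precedes it below -/
import Mathlib

section
/- Let G be a finitely generated group acting by isometries on each of finitely many δ-hyperbolic geodesic metric spaces X₁, …, X_l, such that the diagonal action on the product X with the ℓ¹-metric is metrically proper and has D-coarsely dense orbits. Then there exists a constant C₁ = C₁(D, δ, l) > 0 such that for any M > 0 and any finite subset S ⊆ G, at least one of the following holds: (1) there exists 1 ≤ i ≤ l with λ(S, X_i) > M; (2) for every o ∈ X one has λ(S, G·o) ≤ C₁(M + 1), where λ(S, G·o) = inf_{g∈G} max_{s∈S} d(g·o, s g·o). -/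
open Pointwise

/-- A geodesic from `a` to `b`, parametrized by arc length on `[0, dist a b]`. -/
def IsGeodesicSeg {X : Type*} [MetricSpace X] (γ : ℝ → X) (a b : X) : Prop :=
  γ 0 = a ∧ γ (dist a b) = b ∧
    ∀ s ∈ Set.Icc (0 : ℝ) (dist a b), ∀ t ∈ Set.Icc (0 : ℝ) (dist a b),
      dist (γ s) (γ t) = |s - t|

/-- A geodesic metric space: any two points are joined by a geodesic segment. -/
def GeodesicMetricSpace (X : Type*) [MetricSpace X] : Prop :=
  ∀ a b : X, ∃ γ : ℝ → X, IsGeodesicSeg γ a b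

/-- `δ`-hyperbolicity via thin triangles: every side of a geodesic triangle is in the
`δ`-neighbourhood of the union of the other two sides. -/
def DeltaHyperbolic (X : Type*) [MetricSpace X] (δ : ℝ) : Prop :=
  ∀ a b c : X, ∀ γ₁ γ₂ γ₃ : ℝ → X,
    IsGeodesicSeg γ₁ a b → IsGeodesicSeg γ₂ b c → IsGeodesicSeg γ₃ c a →
    ∀ t ∈ Set.Icc (0 : ℝ) (dist a b),
      (∃ u ∈ Set.Icc (0 : ℝ) (dist b c), dist (γ₁ t) (γ₂ u) ≤ δ) ∨
      (∃ u ∈ Set.Icc (0 : ℝ) (dist c a), dist (γ₁ t) (γ₃ u) ≤ δ)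

/-- The `ℓ¹`-metric on a finite product of metric spaces. -/
noncomputable def dL1 {l : ℕ} {X : Fin l → Type*} [∀ i, MetricSpace (X i)]
    (x y : ∀ i, X i) : ℝ :=
  ∑ i, dist (x i) (y i)

/-- Displacement `λ(S,x) = max_{s ∈ S} d(x, s·x)` of a finite set of group elements
at a point of a `G`-space. -/
noncomputable def dispAt (G : Type*) [Group G] (X : Type*) [MetricSpace X] [MulAction G X]
    (S : Finset G) (x : X) : ℝ :=
  sSup ((fun s : G => dist x (s • x)) '' (S : Set G))

/-- Displacement `λ(S,X) = inf_{x ∈ X} λ(S,x)` of a finite set of group elements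
on a `G`-space. -/
noncomputable def dispSpace (G : Type*) [Group G] (X : Type*) [MetricSpace X] [MulAction G X]
    (S : Finset G) : ℝ :=
  sInf (Set.range fun x : X => dispAt G X S x)

/-- Displacement `λ(S,x) = max_{s ∈ S} d(x, s·x)` at a point of the `ℓ¹`-product. -/
noncomputable def dispAtProd (G : Type*) [Group G] {l : ℕ} (X : Fin l → Type*)
    [∀ i, MetricSpace (X i)] [∀ i, MulAction G (X i)] (S : Finset G) (x : ∀ i, X i) : ℝ :=
  sSup ((fun s : G => dL1 x (fun i => s • x i)) '' (S : Set G))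

/-- Displacement `λ(S,X)` on the whole `ℓ¹`-product `X = X₁ × ⋯ × X_l`. -/
noncomputable def dispProd (G : Type*) [Group G] {l : ℕ} (X : Fin l → Type*)
    [∀ i, MetricSpace (X i)] [∀ i, MulAction G (X i)] (S : Finset G) : ℝ :=
  sInf (Set.range fun x : ∀ i, X i => dispAtProd G X S x)

/-- Displacement `λ(S, G·o) = inf_{g ∈ G} max_{s ∈ S} d(g·o, s·g·o)` on the orbit `G·o`
in the `ℓ¹`-product. -/
noncomputable def dispOrbit (G : Type*) [Group G] {l : ℕ} (X : Fin l → Type*)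
    [∀ i, MetricSpace (X i)] [∀ i, MulAction G (X i)] (S : Finset G) (o : ∀ i, X i) : ℝ :=
  sInf (Set.range fun g : G => dispAtProd G X S (fun i => g • o i))

/-- A finitely generated group `G` acting by isometries on each of `l` many `δ`-hyperbolic
geodesic metric spaces, such that the diagonal action on the `ℓ¹`-product is metrically
proper and has `D`-coarsely dense orbits. -/
structure ProperProductAction (D δ : ℝ) (l : ℕ) (G : Type*) [Group G]
    (X : Fin l → Type*) [∀ i, MetricSpace (X i)] [∀ i, MulAction G (X i)] : Prop where
  fg : Group.FG G
  geodesic : ∀ i, GeodesicMetricSpace (X i)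
  hyperbolic : ∀ i, DeltaHyperbolic (X i) δ
  isom : ∀ (i : Fin l) (g : G) (x y : X i), dist (g • x) (g • y) = dist x y
  proper : ∀ K : Set (∀ i, X i),
    (∃ C : ℝ, ∀ x ∈ K, ∀ y ∈ K, dL1 x y ≤ C) →
    {g : G | ∃ x ∈ K, (fun i => g • x i) ∈ K}.Finite
  denseOrbit : ∃ o : ∀ i, X i, ∀ x : ∀ i, X i, ∃ g : G, dL1 x (fun i => g • o i) ≤ D

/-!
Points that nearly minimise the displacement of `S` on the individual factors form a point of the
product, so `λ(S, X) ≤ ∑ᵢ λ(S, Xᵢ)`. If one orbit is `D`-coarsely dense then every orbit is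
`2D`-coarsely dense, and moving a point by `r` changes the displacement of a set of isometries by
at most `2r`; hence `λ(S, G·o) ≤ λ(S, X) + 4D` for every `o`.
-/

section L1Distance

variable {l : ℕ} {X : Fin l → Type*} [∀ i, MetricSpace (X i)]

theorem dL1_nonneg (x y : ∀ i, X i) : 0 ≤ dL1 x y :=
  Finset.sum_nonneg fun _ _ => dist_nonneg

theorem dL1_comm (x y : ∀ i, X i) : dL1 x y = dL1 y x :=
  Finset.sum_congr rfl fun i _ => dist_comm (x i) (y i)

theorem dL1_triangle (x y z : ∀ i, X i) : dL1 x z ≤ dL1 x y + dL1 y z :=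
  (Finset.sum_le_sum fun i _ => dist_triangle (x i) (y i) (z i)).trans_eq Finset.sum_add_distrib

theorem dL1_smul_smul {G : Type*} [∀ i, SMul G (X i)] [∀ i, IsIsometricSMul G (X i)] (g : G)
    (x y : ∀ i, X i) : dL1 (g • x) (g • y) = dL1 x y :=
  Finset.sum_congr rfl fun i _ => dist_smul g (x i) (y i)

end L1Distance

section DisplacementOnSpace

variable {G : Type*} [Group G] {X : Type*} [MetricSpace X] [MulAction G X] {S : Finset G}

theorem dist_smul_le_dispAt {s : G} (hs : s ∈ S) (x : X) : dist x (s • x) ≤ dispAt G X S x :=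
  le_csSup (S.finite_toSet.image _).bddAbove ⟨s, hs, rfl⟩

theorem exists_dispAt_lt [Nonempty X] {c : ℝ} (hc : dispSpace G X S < c) :
    ∃ x : X, dispAt G X S x < c :=
  exists_lt_of_ciInf_lt hc

end DisplacementOnSpace

section DisplacementOnProduct

variable {G : Type*} [Group G] {l : ℕ} {X : Fin l → Type*} [∀ i, MetricSpace (X i)]
  [∀ i, MulAction G (X i)] {S : Finset G}

theorem dL1_smul_le_dispAtProd {s : G} (hs : s ∈ S) (x : ∀ i, X i) :
    dL1 x (s • x) ≤ dispAtProd G X S x :=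
  le_csSup (S.finite_toSet.image _).bddAbove ⟨s, hs, rfl⟩

theorem dispAtProd_le (hS : S.Nonempty) {x : ∀ i, X i} {c : ℝ}
    (h : ∀ s ∈ S, dL1 x (s • x) ≤ c) : dispAtProd G X S x ≤ c :=
  csSup_le (hS.to_set.image _) (Set.forall_mem_image.2 h)

theorem dispAtProd_nonneg (x : ∀ i, X i) : 0 ≤ dispAtProd G X S x :=
  Real.sSup_nonneg (Set.forall_mem_image.2 fun s _ => dL1_nonneg x (s • x))

theorem dispProd_le_dispAtProd (x : ∀ i, X i) : dispProd G X S ≤ dispAtProd G X S x :=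
  ciInf_le ⟨0, Set.forall_mem_range.2 dispAtProd_nonneg⟩ x

theorem dispOrbit_le_dispAtProd (g : G) (o : ∀ i, X i) :
    dispOrbit G X S o ≤ dispAtProd G X S (g • o) :=
  ciInf_le ⟨0, Set.forall_mem_range.2 fun h : G => dispAtProd_nonneg (h • o)⟩ g

theorem dispAtProd_le_sum_dispAt (hS : S.Nonempty) (x : ∀ i, X i) :
    dispAtProd G X S x ≤ ∑ i, dispAt G (X i) S (x i) :=
  dispAtProd_le hS fun _ hs => Finset.sum_le_sum fun i _ => dist_smul_le_dispAt hs (x i)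

theorem dispProd_le_sum_dispSpace [∀ i, Nonempty (X i)] (hS : S.Nonempty) :
    dispProd G X S ≤ ∑ i, dispSpace G (X i) S := by
  refine le_of_forall_pos_le_add fun ε hε => ?_
  obtain ⟨η, hη, hlη⟩ := exists_pos_mul_lt hε (l : ℝ)
  choose x hx using fun i => exists_dispAt_lt (lt_add_of_pos_right (dispSpace G (X i) S) hη)
  calc dispProd G X S ≤ dispAtProd G X S x := dispProd_le_dispAtProd x
    _ ≤ ∑ i, dispAt G (X i) S (x i) := dispAtProd_le_sum_dispAt hS x
    _ ≤ ∑ i, (dispSpace G (X i) S + η) := Finset.sum_le_sum fun i _ => (hx i).le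
    _ = ∑ i, dispSpace G (X i) S + l * η := by simp [Finset.sum_add_distrib]
    _ ≤ ∑ i, dispSpace G (X i) S + ε := by gcongr

theorem dispAtProd_le_add_two_mul_dL1 [∀ i, IsIsometricSMul G (X i)] (hS : S.Nonempty)
    (x y : ∀ i, X i) : dispAtProd G X S y ≤ dispAtProd G X S x + 2 * dL1 x y := by
  refine dispAtProd_le hS fun s hs => ?_
  calc dL1 y (s • y) ≤ dL1 y x + dL1 x (s • y) := dL1_triangle _ _ _
    _ ≤ dL1 y x + (dL1 x (s • x) + dL1 (s • x) (s • y)) := by gcongr; exact dL1_triangle _ _ _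
    _ = dL1 x (s • x) + 2 * dL1 x y := by rw [dL1_comm y x, dL1_smul_smul]; ring
    _ ≤ dispAtProd G X S x + 2 * dL1 x y := by gcongr; exact dL1_smul_le_dispAtProd hs x

end DisplacementOnProduct

section CoarselyDenseOrbits

variable {G : Type*} [Group G] {l : ℕ} {X : Fin l → Type*} [∀ i, MetricSpace (X i)]
  [∀ i, MulAction G (X i)]

variable (G) in
/-- The orbit `G·o` is `D`-coarsely dense in the `ℓ¹`-product: every point lies within `ℓ¹`-distance
`D` of it. It names the `denseOrbit` condition of `ProperProductAction`. -/
def IsCoarselyDenseOrbit (D : ℝ) (o : ∀ i, X i) : Prop :=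
  ∀ x : ∀ i, X i, ∃ g : G, dL1 x (g • o) ≤ D

variable [∀ i, IsIsometricSMul G (X i)] {D : ℝ} {o : ∀ i, X i}

theorem IsCoarselyDenseOrbit.change_basepoint (ho : IsCoarselyDenseOrbit G D o)
    (p : ∀ i, X i) : IsCoarselyDenseOrbit G (2 * D) p := by
  intro x
  obtain ⟨g, hg⟩ := ho x
  obtain ⟨k, hk⟩ := ho p
  have translated : dL1 (g • o) ((g * k⁻¹) • p) = dL1 p (k • o) := by
    rw [← dL1_smul_smul (g * k⁻¹) p, smul_smul, inv_mul_cancel_right, dL1_comm]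
  refine ⟨g * k⁻¹, ?_⟩
  calc dL1 x ((g * k⁻¹) • p) ≤ dL1 x (g • o) + dL1 (g • o) ((g * k⁻¹) • p) := dL1_triangle _ _ _
    _ ≤ D + D := by rw [translated]; gcongr
    _ = 2 * D := (two_mul D).symm

theorem IsCoarselyDenseOrbit.dispOrbit_le_dispProd_add (ho : IsCoarselyDenseOrbit G D o)
    {S : Finset G} (hS : S.Nonempty) : dispOrbit G X S o ≤ dispProd G X S + 2 * D := by
  have : Nonempty (∀ i, X i) := ⟨o⟩
  refine sub_le_iff_le_add.1 (le_ciInf fun x => sub_le_iff_le_add.2 ?_)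
  obtain ⟨g, hg⟩ := ho x
  calc dispOrbit G X S o ≤ dispAtProd G X S (g • o) := dispOrbit_le_dispAtProd g o
    _ ≤ dispAtProd G X S x + 2 * dL1 x (g • o) := dispAtProd_le_add_two_mul_dL1 hS x _
    _ ≤ dispAtProd G X S x + 2 * D := by gcongr

theorem IsCoarselyDenseOrbit.dispOrbit_le_sum_dispSpace_add (ho : IsCoarselyDenseOrbit G D o)
    {S : Finset G} (hS : S.Nonempty) (p : ∀ i, X i) :
    dispOrbit G X S p ≤ ∑ i, dispSpace G (X i) S + 4 * D := by
  have (i : Fin l) : Nonempty (X i) := ⟨p i⟩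
  calc dispOrbit G X S p ≤ dispProd G X S + 2 * (2 * D) :=
        (ho.change_basepoint p).dispOrbit_le_dispProd_add hS
    _ ≤ ∑ i, dispSpace G (X i) S + 2 * (2 * D) := by gcongr; exact dispProd_le_sum_dispSpace hS
    _ = ∑ i, dispSpace G (X i) S + 4 * D := by ring

theorem statement2_general (ho : IsCoarselyDenseOrbit G D o) (M : ℝ) {S : Finset G}
    (hS : S.Nonempty) :
    (∃ i, M < dispSpace G (X i) S) ∨ ∀ p : ∀ i, X i, dispOrbit G X S p ≤ l * M + 4 * D := by
  refine or_iff_not_imp_left.2 fun small p => ?_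
  push Not at small
  calc dispOrbit G X S p ≤ ∑ i, dispSpace G (X i) S + 4 * D :=
        ho.dispOrbit_le_sum_dispSpace_add hS p
    _ ≤ ∑ _i : Fin l, M + 4 * D := by gcongr with i; exact small i
    _ = l * M + 4 * D := by simp

end CoarselyDenseOrbits

/-- There is a constant `C₁ = C₁(D, δ, l) > 0` such that for any `M > 0`
and any finite nonempty subset `S` of a group `G` with a metrically proper diagonal action
by isometries on an `ℓ¹`-product of `l` many `δ`-hyperbolic geodesic spaces with
`D`-coarsely dense orbits, either `λ(S, X_i) > M` on some factor `X_i`, or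
`λ(S, G·o) ≤ C₁(M + 1)` for every `o ∈ X`. -/
theorem statement2 (D δ : ℝ) (hD : 0 < D) (hδ : 0 ≤ δ) (l : ℕ) (hl : 1 ≤ l) :
    ∃ C₁ : ℝ, 0 < C₁ ∧
      ∀ (G : Type) [Group G] (X : Fin l → Type)
        [∀ i, MetricSpace (X i)] [∀ i, MulAction G (X i)],
        ProperProductAction D δ l G X →
        ∀ M : ℝ, 0 < M → ∀ S : Finset G, S.Nonempty →
          (∃ i : Fin l, M < dispSpace G (X i) S) ∨
          (∀ o : ∀ i, X i, dispOrbit G X S o ≤ C₁ * (M + 1)) := by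
  refine ⟨l + 4 * D, by positivity, fun G _ X _ _ h M hM S hS => ?_⟩
  have (i : Fin l) : IsIsometricSMul G (X i) := ⟨fun g => Isometry.of_dist_eq (h.isom i g)⟩
  obtain ⟨o, ho⟩ : ∃ o : ∀ i, X i, IsCoarselyDenseOrbit G D o := h.denseOrbit
  refine (statement2_general ho M hS).imp_right fun bound p => (bound p).trans ?_
  calc l * M + 4 * D ≤ l * M + 4 * D + (l + 4 * D * M) := le_add_of_nonneg_right (by positivity)
    _ = (l + 4 * D) * (M + 1) := by ring
end

section
/- Let X be a δ-hyperbolic geodesic metric space and let S be a finite nonempty set of isometries of X. Fix two points x, o ∈ X. Then there exist s ∈ S, a geodesic segment from o to s·o, and a point z on this segment, such that λ(S, z) ≤ 6·λ(S, x) + 24δ. -/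
open Pointwise

/-- Displacement `λ(S,x) = max_{s ∈ S} d(x, s·x)` of a finite set of isometries at `x`. -/
noncomputable def idispAt {X : Type*} [MetricSpace X] (S : Finset (X ≃ᵢ X)) (x : X) : ℝ :=
  sSup ((fun s : X ≃ᵢ X => dist x (s x)) '' (S : Set (X ≃ᵢ X)))

/-- Displacement `λ(S,X) = inf_{x ∈ X} λ(S,x)` of a finite set of isometries on `X`. -/
noncomputable def idispSpace {X : Type*} [MetricSpace X] (S : Finset (X ≃ᵢ X)) : ℝ :=
  sInf (Set.range fun x : X => idispAt S x)

/-!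
Thinness gives a single estimate (`DeltaHyperbolic.dist_apply_le_max`): the distance from `y` to a
point of a geodesic `[a, b]` is, up to `2δ`, as small as the triangle inequality permits.

Choose `s ∈ S` moving `o` the most and let `z` be the midpoint of `[o, s o]`, at distance `m` from
`o`. As `s` displaces `x` by at most `λ(S, x)`, the segments `[o, x]` and `[o, s o]` fellow-travel
up to time `m`, so `z` is close to the point `p` of `[o, x]` at distance `m` from `o` (to `x` itself
if `[o, x]` is too short). By the choice of `s`, every `r ∈ S` satisfies `dist o (r o) ≤ 2 * m`,
which forces `r` to displace `p` by little more than it displaces `x`.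
-/

section

variable {X : Type*} [MetricSpace X]

namespace IsGeodesicSeg

variable {γ : ℝ → X} {a b : X} {t : ℝ}

theorem dist_left_apply (h : IsGeodesicSeg γ a b) (ht : t ∈ Set.Icc 0 (dist a b)) :
    dist a (γ t) = t := by
  have hdist := h.2.2 0 ⟨le_rfl, dist_nonneg⟩ t ht
  rwa [h.1, zero_sub, abs_neg, abs_of_nonneg ht.1] at hdist

theorem dist_apply_right (h : IsGeodesicSeg γ a b) (ht : t ∈ Set.Icc 0 (dist a b)) :
    dist (γ t) b = dist a b - t := by
  have hdist := h.2.2 t ht (dist a b) ⟨dist_nonneg, le_rfl⟩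
  rwa [h.2.1, abs_sub_comm, abs_of_nonneg (sub_nonneg.2 ht.2)] at hdist

theorem map {Y : Type*} [MetricSpace Y] {f : X → Y} (hf : Isometry f)
    (h : IsGeodesicSeg γ a b) : IsGeodesicSeg (f ∘ γ) (f a) (f b) := by
  simpa only [IsGeodesicSeg, Function.comp_apply, hf.dist_eq, hf.injective.eq_iff] using h

end IsGeodesicSeg

theorem dist_map_le_two_mul_dist_add {Y : Type*} [PseudoMetricSpace Y] {f : Y → Y}
    (hf : Isometry f) (z p : Y) :
    dist z (f z) ≤ 2 * dist z p + dist p (f p) := by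
  linarith [dist_triangle4 z p (f p) (f z), hf.dist_eq p z, dist_comm p z]

namespace DeltaHyperbolic

variable {δ : ℝ}

theorem dist_apply_le_max (hhyp : DeltaHyperbolic X δ) (hgeo : GeodesicMetricSpace X)
    {γ : ℝ → X} {a b : X} (hγ : IsGeodesicSeg γ a b) {t : ℝ} (ht : t ∈ Set.Icc 0 (dist a b))
    (y : X) :
    dist y (γ t) ≤ max (dist y a - t) (dist y b - (dist a b - t)) + 2 * δ := by
  obtain ⟨β, hβ⟩ := hgeo b y
  obtain ⟨α, hα⟩ := hgeo y a
  rw [← sub_le_iff_le_add, le_max_iff]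
  rcases hhyp a b y γ β α hγ hβ hα t ht with ⟨u, hu, hclose⟩ | ⟨u, hu, hclose⟩
  · right
    linarith [hγ.dist_apply_right ht, hβ.dist_left_apply hu, hβ.dist_apply_right hu,
      dist_triangle (γ t) (β u) b, dist_triangle (γ t) (β u) y, dist_comm y (γ t), dist_comm y b,
      dist_comm b (β u)]
  · left
    linarith [hγ.dist_left_apply ht, hα.dist_left_apply hu, hα.dist_apply_right hu,
      dist_triangle (γ t) (α u) a, dist_triangle (γ t) (α u) y, dist_comm y (γ t),
      dist_comm a (γ t), dist_comm y (α u)]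

theorem dist_apply_apply_le (hhyp : DeltaHyperbolic X δ) (hgeo : GeodesicMetricSpace X)
    (hδ : 0 ≤ δ) {γ c : ℝ → X} {o x y : X} (hγ : IsGeodesicSeg γ o y) (hc : IsGeodesicSeg c o x)
    {t ε : ℝ} (hty : t ∈ Set.Icc 0 (dist o y)) (htx : t ∈ Set.Icc 0 (dist o x)) (hε : 0 ≤ ε)
    (hfork : dist x y + 2 * t ≤ dist o x + dist o y + ε) :
    dist (γ t) (c t) ≤ ε + 4 * δ := by
  have hx : dist (γ t) x ≤ dist o x - t + ε + 2 * δ := by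
    rw [dist_comm (γ t) x]
    refine (hhyp.dist_apply_le_max hgeo hγ hty x).trans (add_le_add_left (max_le ?_ ?_) _)
    · linarith [dist_comm x o]
    · linarith
  have ho : dist (γ t) o = t := by rw [dist_comm, hγ.dist_left_apply hty]
  calc dist (γ t) (c t)
      ≤ max (dist (γ t) o - t) (dist (γ t) x - (dist o x - t)) + 2 * δ :=
        hhyp.dist_apply_le_max hgeo hc htx (γ t)
    _ ≤ (ε + 2 * δ) + 2 * δ := by
        gcongr
        exact max_le (by linarith) (by linarith)
    _ = ε + 4 * δ := by ring

theorem dist_apply_map_apply_le (hhyp : DeltaHyperbolic X δ) (hgeo : GeodesicMetricSpace X)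
    (hδ : 0 ≤ δ) {f : X → X} (hf : Isometry f) {c : ℝ → X} {o x : X} (hc : IsGeodesicSeg c o x)
    {t : ℝ} (ht : t ∈ Set.Icc 0 (dist o x)) (hfo : dist o (f o) ≤ 2 * t) :
    dist (c t) (f (c t)) ≤ dist x (f x) + 4 * δ := by
  have hfc_mem : t ∈ Set.Icc 0 (dist (f o) (f x)) := by rwa [hf.dist_eq]
  have ho : dist (c t) (f o) ≤ t + dist x (f x) + 2 * δ := by
    rw [dist_comm (c t)]
    refine (hhyp.dist_apply_le_max hgeo hc ht (f o)).trans (add_le_add_left (max_le ?_ ?_) _)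
    · linarith [dist_comm o (f o), dist_nonneg (x := x) (y := f x)]
    · linarith [dist_triangle (f o) (f x) x, hf.dist_eq o x, dist_comm x (f x)]
  have hx : dist (c t) (f x) ≤ dist o x - t + dist x (f x) := by
    linarith [dist_triangle (c t) x (f x), hc.dist_apply_right ht]
  calc dist (c t) (f (c t))
      ≤ max (dist (c t) (f o) - t) (dist (c t) (f x) - (dist (f o) (f x) - t)) + 2 * δ :=
        hhyp.dist_apply_le_max hgeo (hc.map hf) hfc_mem (c t)
    _ ≤ (dist x (f x) + 2 * δ) + 2 * δ := by
        rw [hf.dist_eq]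
        gcongr
        exact max_le (by linarith) (by linarith)
    _ = dist x (f x) + 4 * δ := by ring

theorem dist_midpoint_map_midpoint_le (hhyp : DeltaHyperbolic X δ) (hgeo : GeodesicMetricSpace X)
    (hδ : 0 ≤ δ) {f g : X → X} (hf : Isometry f) (hg : Isometry g) {x o : X} {L : ℝ}
    (hfx : dist x (f x) ≤ L) (hgx : dist x (g x) ≤ L) (hgo : dist o (g o) ≤ dist o (f o))
    {γ : ℝ → X} (hγ : IsGeodesicSeg γ o (f o)) :
    dist (γ (dist o (f o) / 2)) (g (γ (dist o (f o) / 2))) ≤ 3 * L + 12 * δ := by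
  set m := dist o (f o) / 2 with hm
  have hm_nonneg : 0 ≤ m := by positivity
  have hm_mem : m ∈ Set.Icc 0 (dist o (f o)) := ⟨hm_nonneg, by linarith⟩
  have hL : 0 ≤ L := dist_nonneg.trans hfx
  have hxfo : dist x (f o) ≤ dist o x + L := by
    linarith [dist_triangle x (f x) (f o), hf.dist_eq x o, dist_comm x o]
  suffices ∃ p, dist (γ m) p ≤ L + 4 * δ ∧ dist p (g p) ≤ L + 4 * δ by
    obtain ⟨p, hzp, hgp⟩ := this
    linarith [dist_map_le_two_mul_dist_add hg (γ m) p]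
  rcases le_total m (dist o x) with hmx | hxm
  · obtain ⟨c, hc⟩ := hgeo o x
    have hgc : dist (c m) (g (c m)) ≤ dist x (g x) + 4 * δ :=
      hhyp.dist_apply_map_apply_le hgeo hδ hg hc ⟨hm_nonneg, hmx⟩ (by linarith)
    exact ⟨c m, hhyp.dist_apply_apply_le hgeo hδ hγ hc hm_mem ⟨hm_nonneg, hmx⟩ hL (by linarith),
      by linarith⟩
  · have hxz : dist x (γ m) ≤ L + 2 * δ := by
      refine (hhyp.dist_apply_le_max hgeo hγ hm_mem x).trans (add_le_add_left (max_le ?_ ?_) _)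
      · linarith [dist_comm x o]
      · linarith
    exact ⟨x, by linarith [dist_comm x (γ m)], by linarith⟩

end DeltaHyperbolic

theorem dist_le_idispAt {S : Finset (X ≃ᵢ X)} {s : X ≃ᵢ X} (hs : s ∈ S) (x : X) :
    dist x (s x) ≤ idispAt S x :=
  le_csSup (S.finite_toSet.image _).bddAbove (Set.mem_image_of_mem _ hs)

theorem idispAt_le {S : Finset (X ≃ᵢ X)} (hS : S.Nonempty) {x : X} {M : ℝ}
    (h : ∀ s ∈ S, dist x (s x) ≤ M) : idispAt S x ≤ M :=
  csSup_le (hS.to_set.image _) (Set.forall_mem_image.2 h)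

theorem statement5_general {δ : ℝ} (hδ : 0 ≤ δ) (hgeo : GeodesicMetricSpace X)
    (hhyp : DeltaHyperbolic X δ) {S : Finset (X ≃ᵢ X)} (hS : S.Nonempty) (x o : X) :
    ∃ s ∈ S, ∀ γ : ℝ → X, IsGeodesicSeg γ o (s o) →
      idispAt S (γ (dist o (s o) / 2)) ≤ 3 * idispAt S x + 12 * δ := by
  obtain ⟨s, hs, hmax⟩ := S.exists_max_image (fun s ↦ dist o (s o)) hS
  exact ⟨s, hs, fun γ hγ ↦ idispAt_le hS fun r hr ↦
    hhyp.dist_midpoint_map_midpoint_le hgeo hδ s.isometry r.isometry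
      (dist_le_idispAt hs x) (dist_le_idispAt hr x) (hmax r hr) hγ⟩

end

/-- Let `X` be a `δ`-hyperbolic geodesic metric space and `S` a finite
nonempty set of isometries of `X`. For any two points `x, o ∈ X` there are `s ∈ S`, a
geodesic from `o` to `s·o`, and a point `z` on it with `λ(S, z) ≤ 6·λ(S, x) + 24δ`. -/
theorem statement5 (δ : ℝ) (hδ : 0 ≤ δ) (X : Type*) [MetricSpace X]
    (hgeo : GeodesicMetricSpace X) (hhyp : DeltaHyperbolic X δ)
    (S : Finset (X ≃ᵢ X)) (hS : S.Nonempty) (x o : X) :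
    ∃ s ∈ S, ∃ γ : ℝ → X, IsGeodesicSeg γ o (s o) ∧
      ∃ t ∈ Set.Icc (0 : ℝ) (dist o (s o)),
        idispAt S (γ t) ≤ 6 * idispAt S x + 24 * δ := by
  obtain ⟨s, hs, hmid⟩ := statement5_general hδ hgeo hhyp hS x o
  obtain ⟨γ, hγ⟩ := hgeo o (s o)
  have hdisp : 0 ≤ idispAt S x := dist_nonneg.trans (dist_le_idispAt hs x)
  exact ⟨s, hs, γ, hγ, dist o (s o) / 2, ⟨by positivity, half_le_self dist_nonneg⟩,
    (hmid γ hγ).trans (by linarith)⟩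
end

section
/- Let G be a group generated as a semigroup by a finite set U (i.e. every element of G is a product of elements of U), and let H be a normal subgroup of G of index d. Then there exists a finite subset W ⊆ U^{≤ d²−d+1} such that W generates H as a group and |W| ≥ |U|/d. -/
open Pointwise

/-- `U` generates the group `G` as a semigroup: every element of `G` is a product of
elements of `U` (no inverses allowed). -/
def SemigroupGenerates {G : Type*} [Group G] (U : Set G) : Prop :=
  ∀ g : G, ∃ n : ℕ, g ∈ U ^ n

/-- `U^{≤m} = ⋃_{i ≤ m} Uⁱ`: products of at most `m` elements of `U`. -/
def wordBall {G : Type*} [Group G] (U : Set G) (m : ℕ) : Set G :=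
  {g : G | ∃ i ≤ m, g ∈ U ^ i}

/-!
Acting with `U` on the `d` cosets of `H` gives a strongly connected digraph with `d` vertices, so
any coset can be moved to any other by a product of at most `d - 1` elements of `U`. In particular
a word `a` of length at most `d` is brought into `H` by left multiplication with a word `s` of
length at most `d - 1`, and the same `s` works for every `b` in the coset `a H`. Hence
`a⁻¹ * b = (s * a)⁻¹ * (s * b)` is generated by words of length at most `2 * d - 1` in `H`, which
lets Schreier's argument run without inverse letters; and `2 * d - 1 ≤ d ^ 2 - d + 1`. For the
cardinality, multiplying each `u ∈ U` by the word `s` of its coset is injective on every coset.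
-/

open Cardinal

section WordBall

variable {G : Type*} [Group G] {U : Set G} {m n : ℕ}

lemma one_mem_wordBall : (1 : G) ∈ wordBall U n :=
  ⟨0, n.zero_le, by simp⟩

lemma mem_wordBall_one {u : G} (hu : u ∈ U) : u ∈ wordBall U 1 :=
  ⟨1, le_rfl, by simpa using hu⟩

lemma wordBall_mono (hmn : m ≤ n) : wordBall U m ⊆ wordBall U n :=
  fun _ ⟨i, him, hi⟩ ↦ ⟨i, him.trans hmn, hi⟩

lemma mul_mem_wordBall {a b : G} (ha : a ∈ wordBall U m) (hb : b ∈ wordBall U n) :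
    a * b ∈ wordBall U (m + n) := by
  obtain ⟨i, him, hi⟩ := ha
  obtain ⟨j, hjn, hj⟩ := hb
  exact ⟨i + j, add_le_add him hjn, pow_add U i j ▸ Set.mul_mem_mul hi hj⟩

lemma mul_mem_wordBall_succ {u a : G} (hu : u ∈ U) (ha : a ∈ wordBall U n) :
    u * a ∈ wordBall U (n + 1) :=
  add_comm 1 n ▸ mul_mem_wordBall (mem_wordBall_one hu) ha

lemma wordBall_finite (hU : U.Finite) (n : ℕ) : (wordBall U n).Finite := by
  have eq_biUnion : wordBall U n = ⋃ i ∈ Set.Iic n, U ^ i := by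
    ext g
    simp [wordBall]
  classical
  lift U to Finset G using hU
  rw [eq_biUnion]
  exact (Set.finite_Iic n).biUnion fun i _ ↦ U.coe_pow i ▸ (U ^ i).finite_toSet

lemma SemigroupGenerates.induction (hU : SemigroupGenerates U) {p : G → Prop} (one : p 1)
    (mul : ∀ u ∈ U, ∀ g, p g → p (u * g)) (g : G) : p g := by
  obtain ⟨n, hg⟩ := hU g
  induction n generalizing g with
  | zero =>
    obtain rfl : g = 1 := by simpa using hg
    exact one
  | succ n ih =>
    rw [pow_succ'] at hg
    obtain ⟨u, hu, a, ha, rfl⟩ := Set.mem_mul.1 hg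
    exact mul u hu a (ih a ha)

end WordBall

section Action

variable {G X : Type*} [Group G] [MulAction G X] {U : Set G} {x : X} {m n : ℕ}

/-- The ball of radius `n` around `x` in the Schreier digraph of the action of `U` on `X`: the
points to which `x` is moved by products of at most `n` elements of `U`. -/
def reachableSet (U : Set G) (x : X) (n : ℕ) : Set X :=
  (· • x) '' wordBall U n

lemma mem_reachableSet_self : x ∈ reachableSet U x n :=
  ⟨1, one_mem_wordBall, one_smul G x⟩

lemma reachableSet_mono (hmn : m ≤ n) : reachableSet U x m ⊆ reachableSet U x n :=
  Set.image_mono (wordBall_mono hmn)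

lemma smul_mem_reachableSet_succ {u : G} {y : X} (hu : u ∈ U) (hy : y ∈ reachableSet U x n) :
    u • y ∈ reachableSet U x (n + 1) := by
  obtain ⟨a, ha, rfl⟩ := hy
  exact ⟨u * a, mul_mem_wordBall_succ hu ha, mul_smul u a x⟩

variable [MulAction.IsPretransitive G X]

lemma reachableSet_eq_univ_of_eq_succ (hU : SemigroupGenerates U)
    (h : reachableSet U x n = reachableSet U x (n + 1)) : reachableSet U x n = Set.univ := by
  have smul_mem (g : G) : g • x ∈ reachableSet U x n := by
    induction g using hU.induction with
    | one => simpa only [one_smul] using mem_reachableSet_self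
    | mul u hu g ih => simpa only [h, mul_smul] using smul_mem_reachableSet_succ hu ih
  refine Set.eq_univ_of_forall fun y ↦ ?_
  obtain ⟨g, rfl⟩ := MulAction.exists_smul_eq G x y
  exact smul_mem g

variable [Finite X]

lemma reachableSet_eq_univ_or_lt_ncard (hU : SemigroupGenerates U) (x : X) (n : ℕ) :
    reachableSet U x n = Set.univ ∨ n < (reachableSet U x n).ncard := by
  induction n with
  | zero => exact .inr <| (Set.ncard_pos (Set.toFinite _)).2 ⟨x, mem_reachableSet_self⟩
  | succ n ih =>
    have subset_succ : reachableSet U x n ⊆ reachableSet U x (n + 1) :=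
      reachableSet_mono n.le_succ
    by_cases h : reachableSet U x n = reachableSet U x (n + 1)
    · exact .inl (h ▸ reachableSet_eq_univ_of_eq_succ hU h)
    · have ncard_lt := Set.ncard_lt_ncard (subset_succ.ssubset_of_ne h) (Set.toFinite _)
      obtain eq_univ | lt_ncard := ih
      · exact .inl (Set.univ_subset_iff.1 (eq_univ ▸ subset_succ))
      · exact .inr (by omega)

lemma exists_mem_wordBall_smul_eq (hU : SemigroupGenerates U) (x y : X) :
    ∃ g ∈ wordBall U (Nat.card X - 1), g • x = y := by
  suffices reachable_eq : reachableSet U x (Nat.card X - 1) = Set.univ from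
    reachable_eq.ge (Set.mem_univ y)
  by_contra ne_univ
  have lt_ncard := (reachableSet_eq_univ_or_lt_ncard hU x _).resolve_left ne_univ
  have ncard_lt := Set.ncard_lt_card ne_univ
  omega

end Action

section FiniteIndex

variable {G : Type*} [Group G] {U : Set G} (H : Subgroup G) [H.FiniteIndex]

lemma index_sub_one_add_one : H.index - 1 + 1 = H.index :=
  Nat.sub_one_add_one Subgroup.FiniteIndex.index_ne_zero

lemma exists_mem_wordBall_inv_mul_mem (hU : SemigroupGenerates U) (g : G) :
    ∃ t ∈ wordBall U (H.index - 1), t⁻¹ * g ∈ H := by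
  obtain ⟨t, ht, h⟩ := exists_mem_wordBall_smul_eq hU ((1 : G) : G ⧸ H) g
  exact ⟨t, ht, by simpa [QuotientGroup.eq] using h⟩

lemma exists_mem_wordBall_forall_mul_mem (hU : SemigroupGenerates U) (q : G ⧸ H) :
    ∃ s ∈ wordBall U (H.index - 1), ∀ g : G, (g : G ⧸ H) = q → s * g ∈ H := by
  obtain ⟨s, hs, h⟩ := exists_mem_wordBall_smul_eq hU q ((1 : G) : G ⧸ H)
  refine ⟨s, hs, ?_⟩
  rintro g rfl
  simpa [QuotientGroup.eq] using h.symm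

lemma inv_mul_mem_closure_wordBall_inter (hU : SemigroupGenerates U) {a b : G}
    (ha : a ∈ wordBall U H.index) (hb : b ∈ wordBall U H.index) (hab : a⁻¹ * b ∈ H) :
    a⁻¹ * b ∈ Subgroup.closure (wordBall U (2 * H.index - 1) ∩ H) := by
  obtain ⟨s, hs, mul_mem_H⟩ := exists_mem_wordBall_forall_mul_mem H hU (a : G ⧸ H)
  have mul_mem_closure {c : G} (hc : c ∈ wordBall U H.index) (hac : (c : G ⧸ H) = a) :
      s * c ∈ Subgroup.closure (wordBall U (2 * H.index - 1) ∩ H) :=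
    Subgroup.subset_closure
      ⟨wordBall_mono (by omega) (mul_mem_wordBall hs hc), mul_mem_H c hac⟩
  have eq_inv_mul : a⁻¹ * b = (s * a)⁻¹ * (s * b) := by group
  rw [eq_inv_mul]
  exact mul_mem (inv_mem (mul_mem_closure ha rfl))
    (mul_mem_closure hb (QuotientGroup.eq.2 hab).symm)

lemma exists_mem_wordBall_inv_mul_mem_closure (hU : SemigroupGenerates U) (g : G) :
    ∃ t ∈ wordBall U (H.index - 1),
      t⁻¹ * g ∈ Subgroup.closure (wordBall U (2 * H.index - 1) ∩ H) := by
  induction g using hU.induction with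
  | one => exact ⟨1, one_mem_wordBall, by simp⟩
  | mul u hu g ih =>
    obtain ⟨t, ht, htg⟩ := ih
    obtain ⟨t', ht', h⟩ := exists_mem_wordBall_inv_mul_mem H hU (u * t)
    have hut : u * t ∈ wordBall U H.index :=
      index_sub_one_add_one H ▸ mul_mem_wordBall_succ hu ht
    have eq_mul : t'⁻¹ * (u * g) = t'⁻¹ * (u * t) * (t⁻¹ * g) := by group
    refine ⟨t', ht', eq_mul ▸ mul_mem ?_ htg⟩
    exact inv_mul_mem_closure_wordBall_inter H hU (wordBall_mono (Nat.sub_le _ 1) ht') hut h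

theorem closure_wordBall_inter_eq (hU : SemigroupGenerates U) :
    Subgroup.closure (wordBall U (2 * H.index - 1) ∩ H) = H := by
  have closure_le : Subgroup.closure (wordBall U (2 * H.index - 1) ∩ H) ≤ H :=
    (Subgroup.closure_le H).2 Set.inter_subset_right
  refine closure_le.antisymm fun g hg ↦ ?_
  obtain ⟨t, ht, htg⟩ := exists_mem_wordBall_inv_mul_mem_closure H hU g
  have htH : t ∈ H := inv_mem_iff.1 ((mul_mem_cancel_right hg).1 (closure_le htg))
  have ht_closure : t ∈ Subgroup.closure (wordBall U (2 * H.index - 1) ∩ H) :=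
    Subgroup.subset_closure ⟨wordBall_mono (by omega) ht, htH⟩
  exact (mul_mem_cancel_left (inv_mem ht_closure)).1 htg

theorem mk_le_index_mul_mk_wordBall_inter (hU : SemigroupGenerates U) :
    #U ≤ H.index * #(wordBall U H.index ∩ H : Set G) := by
  choose s hs mul_mem_H using exists_mem_wordBall_forall_mul_mem H hU
  have mem_inter (u : U) : s (u : G) * u ∈ wordBall U H.index ∩ H :=
    ⟨index_sub_one_add_one H ▸ mul_mem_wordBall (hs _) (mem_wordBall_one u.2),
      mul_mem_H _ u rfl⟩
  let f (u : U) : (G ⧸ H) × (wordBall U H.index ∩ H : Set G) := ((u : G), ⟨_, mem_inter u⟩)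
  have f_injective : Function.Injective f := by
    intro u v huv
    obtain ⟨coset_eq, mul_eq⟩ := by simpa only [f, Prod.mk.injEq, Subtype.mk.injEq] using huv
    exact Subtype.ext (mul_left_cancel (coset_eq ▸ mul_eq))
  calc #U ≤ #((G ⧸ H) × (wordBall U H.index ∩ H : Set G)) := mk_le_of_injective f_injective
    _ = #(G ⧸ H) * #(wordBall U H.index ∩ H : Set G) := (mul_def _ _).symm
    _ = H.index * #(wordBall U H.index ∩ H : Set G) := by rw [Subgroup.index, Nat.cast_card]

theorem statement12_general (hU : SemigroupGenerates U) :
    ∃ W ⊆ wordBall U (2 * H.index - 1),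
      Subgroup.closure W = H ∧ #U ≤ H.index * #W := by
  have inter_subset : wordBall U H.index ∩ H ⊆ wordBall U (2 * H.index - 1) ∩ H :=
    Set.inter_subset_inter_left _ (wordBall_mono (by have := index_sub_one_add_one H; omega))
  refine ⟨wordBall U (2 * H.index - 1) ∩ H, Set.inter_subset_left,
    closure_wordBall_inter_eq H hU, ?_⟩
  exact (mk_le_index_mul_mk_wordBall_inter H hU).trans <|
    mul_le_mul_right (mk_le_mk_of_subset inter_subset) _

end FiniteIndex

lemma two_mul_sub_one_le_sq_sub_add_one (d : ℕ) : 2 * d - 1 ≤ d ^ 2 - d + 1 := by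
  obtain _ | k := d
  · simp
  have sq_sub : (k + 1) ^ 2 - (k + 1) = k * k + k := Nat.sub_eq_of_eq_add (by ring)
  have := k.le_mul_self
  omega

/-- Let `G` be a group generated as a semigroup by a finite set `U`, and
let `H` be a normal subgroup of index `d` in `G`. Then there is a finite
`W ⊆ U^{≤ d²−d+1}` generating `H` as a group with `|W| ≥ |U|/d`. -/
theorem statement12 {G : Type*} [Group G] (U : Finset G)
    (hU : SemigroupGenerates (U : Set G)) (H : Subgroup G) (hN : H.Normal)
    (d : ℕ) (hd : 0 < d) (hidx : H.index = d) :
    ∃ W : Finset G, (W : Set G) ⊆ wordBall (U : Set G) (d ^ 2 - d + 1) ∧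
      Subgroup.closure (W : Set G) = H ∧ (U.card : ℝ) / d ≤ (W.card : ℝ) := by
  subst hidx
  have : H.FiniteIndex := ⟨hd.ne'⟩
  obtain ⟨W, W_subset, closure_W, card_le⟩ := statement12_general H hU
  lift W to Finset G using (wordBall_finite U.finite_toSet _).subset W_subset
  refine ⟨W, W_subset.trans (wordBall_mono (two_mul_sub_one_le_sq_sub_add_one _)), closure_W, ?_⟩
  rw [div_le_iff₀' (by exact_mod_cast hd)]
  simp only [Finset.coe_sort_coe, mk_coe_finset] at card_le
  exact_mod_cast card_le
end

section
/- Let ρ: G → G' be a surjective group homomorphism with finite kernel. Suppose there exist α, β > 0 such that every finite set U generating G' as a semigroup satisfies |Uⁿ| ≥ (α|U|)^{βn} for all integers n ≥ 1. Then every finite set W generating G as a semigroup satisfies |Wⁿ| ≥ ((α/|ker ρ|)·|W|)^{βn} for all integers n ≥ 1. -/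
open Pointwise

theorem SemigroupGenerates.image {G G' : Type*} [Group G] [Group G'] {U : Set G}
    (hU : SemigroupGenerates U) {ρ : G →* G'} (hρ : Function.Surjective ρ) :
    SemigroupGenerates (ρ '' U) := by
  intro g'
  obtain ⟨g, rfl⟩ := hρ g'
  obtain ⟨n, hg⟩ := hU g
  exact ⟨n, Set.image_pow ρ U n ▸ Set.mem_image_of_mem ρ hg⟩

theorem card_image_pow_le {M N : Type*} [Monoid M] [Monoid N] [DecidableEq M] [DecidableEq N]
    (f : M →* N) (s : Finset M) (n : ℕ) : (s.image f ^ n).card ≤ (s ^ n).card := by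
  rw [← Finset.image_pow]
  exact Finset.card_image_le

theorem card_le_card_image_mul_card_ker {G H : Type*} [Group G] [Group H] [DecidableEq H]
    (f : G →* H) [Finite f.ker] (s : Finset G) :
    s.card ≤ (s.image f).card * Nat.card f.ker := by
  rw [mul_comm]
  refine Finset.card_le_mul_card_image s _ fun b hb ↦ ?_
  obtain ⟨a, -, rfl⟩ := Finset.mem_image.mp hb
  have fiber_subset : (({x ∈ s | f x = f a} : Finset G) : Set G) ⊆ f ⁻¹' {f a} :=
    fun x hx ↦ (Finset.mem_filter.mp hx).2
  have fiber_finite : (f ⁻¹' {f a}).Finite := Finite.of_equiv _ (f.fiberEquivKer a).symm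
  calc ({x ∈ s | f x = f a} : Finset G).card
      = (({x ∈ s | f x = f a} : Finset G) : Set G).ncard := (Set.ncard_coe_finset _).symm
    _ ≤ (f ⁻¹' {f a}).ncard := Set.ncard_le_ncard fiber_subset fiber_finite
    _ = Nat.card f.ker := Nat.card_congr (f.fiberEquivKer a)

/-- Let `ρ : G → G'` be a surjective homomorphism with finite kernel,
and suppose `α, β > 0` are such that every finite set `U` generating `G'` as a semigroup
satisfies `|Uⁿ| ≥ (α|U|)^{βn}` for all `n ≥ 1`. Then every finite set `W` generating `G`
as a semigroup satisfies `|Wⁿ| ≥ ((α/|ker ρ|)·|W|)^{βn}` for all `n ≥ 1`. -/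
theorem statement15 {G G' : Type*} [Group G] [Group G'] (ρ : G →* G')
    (hsurj : Function.Surjective ρ) (hker : (ρ.ker : Set G).Finite)
    (α β : ℝ) (hα : 0 < α) (hβ : 0 < β)
    (h : ∀ U : Finset G', SemigroupGenerates (U : Set G') →
      ∀ n : ℕ, 1 ≤ n →
        (α * (U.card : ℝ)) ^ (β * (n : ℝ)) ≤ (((U : Set G') ^ n).ncard : ℝ)) :
    ∀ W : Finset G, SemigroupGenerates (W : Set G) →
      ∀ n : ℕ, 1 ≤ n →
        ((α / (Nat.card ρ.ker : ℝ)) * (W.card : ℝ)) ^ (β * (n : ℝ))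
          ≤ (((W : Set G) ^ n).ncard : ℝ) := by
  classical
  intro W hW n hn
  have : Finite ρ.ker := hker
  have image_generates : SemigroupGenerates ((W.image ρ : Finset G') : Set G') := by
    rw [Finset.coe_image]
    exact hW.image hsurj
  have card_div_le : (W.card : ℝ) / Nat.card ρ.ker ≤ (W.image ρ).card :=
    div_le_of_le_mul₀ (by positivity) (by positivity)
      (mod_cast card_le_card_image_mul_card_ker ρ W)
  calc (α / (Nat.card ρ.ker : ℝ) * (W.card : ℝ)) ^ (β * (n : ℝ))
      = (α * ((W.card : ℝ) / Nat.card ρ.ker)) ^ (β * (n : ℝ)) := by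
        rw [div_mul_eq_mul_div, mul_div_assoc]
    _ ≤ (α * ((W.image ρ).card : ℝ)) ^ (β * (n : ℝ)) := by gcongr
    _ ≤ ((((W.image ρ : Finset G') : Set G') ^ n).ncard : ℝ) := h _ image_generates n hn
    _ ≤ (((W : Set G) ^ n).ncard : ℝ) := by
        simp only [← Finset.coe_pow, Set.ncard_coe_finset]
        exact_mod_cast card_image_pow_le ρ W n
end
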